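/- Let α_x ≥ 0, α_p > 0, α_z ≥ 0, σ_μ ≥ 0, set α = α_x + α_p + α_z and α_ψ = α²/(α_x + α_p²·σ_μ²). If √(α_x/(α_p + α_z)² + σ_μ²/(1 + α_z/α_p)²) ≥ 1/√(2π), then for every Z ∈ ℝ, every x_c ∈ ℝ and every m ∈ ℝ, the equation Φ(√α_ψ·(((α_z + α_p)/α)·θ − (α_z/α)·Z − (α_p/α)·m − x_c/√α)) = θ has exactly one real solution θ*, and θ* ∈ (0,1). -/

import Mathlib

/-- The standard normal cumulative distribution function. -/
noncomputable def stdNormalCDF (x : ℝ) : ℝ :=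
  ∫ t in Set.Iic x, (Real.sqrt (2 * Real.pi))⁻¹ * Real.exp (-t ^ 2 / 2)

open MeasureTheory Set

lemma sn_integrable : Integrable (fun t : ℝ => (Real.sqrt (2 * Real.pi))⁻¹ * Real.exp (-t ^ 2 / 2)) := by
  have := ProbabilityTheory.integrable_gaussianPDFReal 0 1
  simpa [ProbabilityTheory.gaussianPDFReal_def] using this

lemma sn_integral : ∫ t : ℝ, (Real.sqrt (2 * Real.pi))⁻¹ * Real.exp (-t ^ 2 / 2) = 1 := by
  have := ProbabilityTheory.integral_gaussianPDFReal_eq_one 0 (v := 1) one_ne_zero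
  simpa [ProbabilityTheory.gaussianPDFReal_def] using this

lemma sn_deriv (x : ℝ) : HasDerivAt stdNormalCDF
    ((Real.sqrt (2 * Real.pi))⁻¹ * Real.exp (-x ^ 2 / 2)) x := by
  have h1 : stdNormalCDF = fun y => stdNormalCDF 0 +
      ∫ t in (0:ℝ)..y, (Real.sqrt (2 * Real.pi))⁻¹ * Real.exp (-t ^ 2 / 2) := by
    funext y
    have := intervalIntegral.integral_Iic_sub_Iic (a := 0) (b := y)
      sn_integrable.integrableOn sn_integrable.integrableOn
    rw [← this]
    simp only [stdNormalCDF]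
    ring
  rw [h1]
  apply HasDerivAt.const_add
  have hc : Continuous (fun t : ℝ => (Real.sqrt (2 * Real.pi))⁻¹ * Real.exp (-t ^ 2 / 2)) := by
    fun_prop
  exact intervalIntegral.integral_hasDerivAt_right (hc.intervalIntegrable _ _)
    (hc.stronglyMeasurableAtFilter _ _) hc.continuousAt

lemma sn_cont : Continuous stdNormalCDF :=
  continuous_iff_continuousAt.2 fun x => (sn_deriv x).continuousAt

lemma sn_c_pos : 0 < (Real.sqrt (2 * Real.pi))⁻¹ := by
  have := Real.pi_pos
  positivity

lemma sn_mono : StrictMono stdNormalCDF := by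
  apply strictMono_of_deriv_pos
  intro x
  rw [(sn_deriv x).deriv]
  exact mul_pos sn_c_pos (Real.exp_pos _)

lemma sn_pos (x : ℝ) : 0 < stdNormalCDF x := by
  refine lt_of_le_of_lt ?_ (sn_mono (sub_one_lt x))
  exact integral_nonneg fun t => (mul_pos sn_c_pos (Real.exp_pos _)).le

lemma sn_lt_one (x : ℝ) : stdNormalCDF x < 1 := by
  refine lt_of_lt_of_le (sn_mono (lt_add_one x)) ?_
  rw [← sn_integral]
  exact setIntegral_le_integral sn_integrable
    (Filter.Eventually.of_forall fun t => (mul_pos sn_c_pos (Real.exp_pos _)).le)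

lemma sn_lip : StrictMono (fun x => (Real.sqrt (2 * Real.pi))⁻¹ * x - stdNormalCDF x) := by
  have hd : ∀ x, HasDerivAt (fun x => (Real.sqrt (2 * Real.pi))⁻¹ * x - stdNormalCDF x)
      ((Real.sqrt (2 * Real.pi))⁻¹ * 1 -
        (Real.sqrt (2 * Real.pi))⁻¹ * Real.exp (-x ^ 2 / 2)) x := fun x =>
    ((hasDerivAt_id x).const_mul _).sub (sn_deriv x)
  have hc : Continuous (fun x => (Real.sqrt (2 * Real.pi))⁻¹ * x - stdNormalCDF x) :=
    continuous_iff_continuousAt.2 fun x => (hd x).continuousAt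
  have hp : ∀ x : ℝ, x ≠ 0 →
      0 < deriv (fun x => (Real.sqrt (2 * Real.pi))⁻¹ * x - stdNormalCDF x) x := by
    intro x hx
    rw [(hd x).deriv, ← mul_sub]
    apply mul_pos sn_c_pos
    rw [sub_pos, Real.exp_lt_one_iff]
    have : 0 < x ^ 2 := by positivity
    linarith
  apply StrictMonoOn.Iic_union_Ici (a := 0)
  · apply strictMonoOn_of_deriv_pos (convex_Iic 0) hc.continuousOn
    intro x hx
    rw [interior_Iic] at hx
    exact hp x (ne_of_lt hx)
  · apply strictMonoOn_of_deriv_pos (convex_Ici 0) hc.continuousOn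
    intro x hx
    rw [interior_Ici] at hx
    exact hp x (ne_of_gt hx)

lemma sn_aux (k b : ℝ) (hk : 0 < k) (hk2 : k ≤ Real.sqrt (2 * Real.pi)) (x y : ℝ)
    (hx : stdNormalCDF (k * x + b) = x) (hy : stdNormalCDF (k * y + b) = y) : ¬ x < y := by
  intro hxy
  have h1 : k * x + b < k * y + b := by nlinarith
  have h2 := sn_lip h1
  simp only [hx, hy] at h2
  have h3 : (Real.sqrt (2 * Real.pi))⁻¹ * k ≤ 1 := by
    rw [inv_mul_le_iff₀ (inv_pos.1 sn_c_pos)]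
    linarith
  nlinarith

lemma sn_main (k b : ℝ) (hk : 0 < k) (hk2 : k ≤ Real.sqrt (2 * Real.pi)) :
    ∃ θ ∈ Set.Ioo (0 : ℝ) 1, stdNormalCDF (k * θ + b) = θ ∧
      ∀ θ' : ℝ, stdNormalCDF (k * θ' + b) = θ' → θ' = θ := by
  have hc : ContinuousOn (fun θ => θ - stdNormalCDF (k * θ + b)) (Icc 0 1) := by
    have := sn_cont
    fun_prop
  have h0 : (0:ℝ) ∈ Icc ((fun θ => θ - stdNormalCDF (k * θ + b)) 0)
      ((fun θ => θ - stdNormalCDF (k * θ + b)) 1) := by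
    constructor
    · have := sn_pos (k * 0 + b)
      simp only; linarith
    · have := sn_lt_one (k * 1 + b)
      simp only; linarith
  obtain ⟨θ, -, h⟩ := intermediate_value_Icc (zero_le_one (α := ℝ)) hc h0
  have h' : stdNormalCDF (k * θ + b) = θ := by
    simp only at h; linarith
  refine ⟨θ, ⟨h' ▸ sn_pos _, h' ▸ sn_lt_one _⟩, h', fun y hy => ?_⟩
  exact le_antisymm (not_lt.1 (sn_aux k b hk hk2 _ _ h' hy)) (not_lt.1 (sn_aux k b hk hk2 _ _ hy h'))

theorem stmt_6 (αx αp αz σμ : ℝ) (hαx : 0 ≤ αx) (hαp : 0 < αp) (hαz : 0 ≤ αz)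
    (hσμ : 0 ≤ σμ)
    (α αψ : ℝ) (hα : α = αx + αp + αz) (hαψ : αψ = α ^ 2 / (αx + αp ^ 2 * σμ ^ 2))
    (h : Real.sqrt (αx / (αp + αz) ^ 2 + σμ ^ 2 / (1 + αz / αp) ^ 2) ≥
      1 / Real.sqrt (2 * Real.pi)) :
    ∀ Z xc m : ℝ,
      ∃ θ ∈ Set.Ioo (0 : ℝ) 1,
        stdNormalCDF (Real.sqrt αψ *
          (((αz + αp) / α) * θ - (αz / α) * Z - (αp / α) * m - xc / Real.sqrt α)) = θ ∧
        ∀ θ' : ℝ,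
          stdNormalCDF (Real.sqrt αψ *
            (((αz + αp) / α) * θ' - (αz / α) * Z - (αp / α) * m - xc / Real.sqrt α)) = θ' →
          θ' = θ := by
  intro Z xc m
  have hα0 : 0 < α := by rw [hα]; positivity
  have hs : 0 < αp + αz := by positivity
  have hpi := Real.pi_pos
  have e : αx / (αp + αz) ^ 2 + σμ ^ 2 / (1 + αz / αp) ^ 2
      = (αx + αp ^ 2 * σμ ^ 2) / (αp + αz) ^ 2 := by
    have : 1 + αz / αp = (αp + αz) / αp := by field_simp
    rw [this]
    field_simp
  rw [e, ge_iff_le, ← Real.sqrt_one, ← Real.sqrt_div zero_le_one,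
    Real.sqrt_le_sqrt_iff (by positivity), div_le_div_iff₀ (by positivity) (by positivity)] at h
  have hD : 0 < αx + αp ^ 2 * σμ ^ 2 := by
    by_contra hn
    have : 0 < (αp + αz) ^ 2 := by positivity
    nlinarith
  have hψ : 0 < αψ := by rw [hαψ]; positivity
  have hk : 0 < Real.sqrt αψ * ((αz + αp) / α) := by positivity
  have hk2 : Real.sqrt αψ * ((αz + αp) / α) ≤ Real.sqrt (2 * Real.pi) := by
    apply Real.le_sqrt_of_sq_le
    rw [mul_pow, Real.sq_sqrt hψ.le, hαψ]
    have : α ^ 2 / (αx + αp ^ 2 * σμ ^ 2) * ((αz + αp) / α) ^ 2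
      = (αz + αp) ^ 2 / (αx + αp ^ 2 * σμ ^ 2) := by field_simp
    rw [this, div_le_iff₀ hD]
    nlinarith
  have := sn_main _ (Real.sqrt αψ * (- (αz / α) * Z - (αp / α) * m - xc / Real.sqrt α)) hk hk2
  have e2 : ∀ θ : ℝ, Real.sqrt αψ *
          (((αz + αp) / α) * θ - (αz / α) * Z - (αp / α) * m - xc / Real.sqrt α)
      = Real.sqrt αψ * ((αz + αp) / α) * θ +
        Real.sqrt αψ * (- (αz / α) * Z - (αp / α) * m - xc / Real.sqrt α) := fun θ => by ring
  simp only [e2]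
  exact this
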